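/- If v ∈ V_8 is a nonzero binary octic with exactly k distinct complex roots (counted projectively), then the dimension of the GL(2,ℝ)-orbit root-type stratum of v in V_8 ≅ ℝ^9 (the set of all octics with the same root multiplicity and conjugation pattern) equals k + 1. -/

import Mathlib

open MvPolynomial

noncomputable section

/-- Complexification of a real binary form. -/
def mapC (v : MvPolynomial (Fin 2) ℝ) : MvPolynomial (Fin 2) ℂ :=
  MvPolynomial.map (algebraMap ℝ ℂ) v

/-- The linear form w·x - z·y corresponding to the projective root [z:w]. -/
def lin (z w : ℂ) : MvPolynomial (Fin 2) ℂ :=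
  MvPolynomial.C w * X 0 - MvPolynomial.C z * X 1

/-- The binary octic with coefficient vector x ∈ ℝ⁹ (binomial basis). -/
def polyOf (x : Fin 9 → ℝ) : MvPolynomial (Fin 2) ℝ :=
  ∑ k : Fin 9, MvPolynomial.C (x k * (Nat.choose 8 k : ℝ)) *
    X 0 ^ (8 - (k : ℕ)) * X 1 ^ (k : ℕ)

/-- Roots i and j are a complex-conjugate pair (projectively). -/
def conjPaired {m : ℕ} (z w : Fin m → ℂ) (i j : Fin m) : Prop :=
  (starRingEnd ℂ) (z i) * w j = (starRingEnd ℂ) (w i) * z j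

/-- The root-type stratum: all coefficient vectors x ∈ ℝ⁹ whose octic has the
same root multiplicity pattern r and the same conjugation pattern as the
reference root data (z, w). -/
def stratum (m : ℕ) (r : Fin m → ℕ) (z w : Fin m → ℂ) : Set (Fin 9 → ℝ) :=
  {x | ∃ (c' : ℂ) (z' w' : Fin m → ℂ), c' ≠ 0 ∧
    (∀ i, ¬(z' i = 0 ∧ w' i = 0)) ∧
    (∀ i j, i ≠ j → z' i * w' j ≠ z' j * w' i) ∧
    mapC (polyOf x) = MvPolynomial.C c' * ∏ i, (lin (z' i) (w' i)) ^ (r i) ∧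
    (∀ i j, conjPaired z w i j ↔ conjPaired z' w' i j)}


open Filter Topology

/-- Cross product pairing on `ℂ²`; also the value at `b` of the linear form with root `a`. -/
def cr (a b : ℂ × ℂ) : ℂ := a.2 * b.1 - a.1 * b.2

/-- Complex conjugation on `ℂ²`. -/
def cj (a : ℂ × ℂ) : ℂ × ℂ := (starRingEnd ℂ a.1, starRingEnd ℂ a.2)

/-- A transverse direction to `a`. -/
def dd (a : ℂ × ℂ) : ℂ × ℂ := (-starRingEnd ℂ a.2, starRingEnd ℂ a.1)

/-- Values of the octic with coefficient vector `x`. -/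
def GG (x : Fin 9 → ℝ) (v : ℂ × ℂ) : ℂ := MvPolynomial.eval ![v.1, v.2] (mapC (polyOf x))

/-- Product of linear forms. -/
def QQ {m : ℕ} (r : Fin m → ℕ) (u : Fin m → ℂ × ℂ) (v : ℂ × ℂ) : ℂ := ∏ i, cr (u i) v ^ r i

lemma cr_add_right (a b c : ℂ × ℂ) : cr a (b + c) = cr a b + cr a c := by
  simp [cr]; ring
lemma cr_add_left (a b c : ℂ × ℂ) : cr (a + b) c = cr a c + cr b c := by
  simp [cr]; ring
lemma cr_smul_right (a b : ℂ × ℂ) (t : ℂ) : cr a (t • b) = t * cr a b := by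
  simp [cr]; ring
lemma cr_smul_left (a b : ℂ × ℂ) (t : ℂ) : cr (t • a) b = t * cr a b := by
  simp [cr]; ring
lemma cr_self (a : ℂ × ℂ) : cr a a = 0 := by simp [cr]; ring
lemma cr_swap (a b : ℂ × ℂ) : cr a b = - cr b a := by simp [cr]; ring
lemma cr_comm_zero {a b : ℂ × ℂ} (h : cr a b = 0) : cr b a = 0 := by rw [cr_swap, h, neg_zero]
lemma cr_cj (a b : ℂ × ℂ) : cr (cj a) (cj b) = starRingEnd ℂ (cr a b) := by simp [cr, cj]
lemma cj_cj (a : ℂ × ℂ) : cj (cj a) = a := by simp [cj]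
lemma dd_cj (a : ℂ × ℂ) : dd (cj a) = cj (dd a) := by simp [dd, cj]
lemma cj_add (a b : ℂ × ℂ) : cj (a + b) = cj a + cj b := by simp [cj]
lemma cj_smul (t : ℂ) (b : ℂ × ℂ) : cj (t • b) = starRingEnd ℂ t • cj b := by simp [cj]
lemma cj_ne {a : ℂ × ℂ} (h : a ≠ 0) : cj a ≠ 0 := by
  intro h'
  apply h
  rw [← cj_cj a, h']; simp [cj]

lemma cr_dd_ne {a : ℂ × ℂ} (h : a ≠ 0) : cr a (dd a) ≠ 0 := by
  have : cr a (dd a) = -((Complex.normSq a.1 + Complex.normSq a.2 : ℝ) : ℂ) := by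
    simp only [cr, dd]; push_cast; rw [Complex.normSq_eq_conj_mul_self, Complex.normSq_eq_conj_mul_self]; ring
  rw [this, neg_ne_zero, Complex.ofReal_ne_zero]
  intro h0
  apply h
  have h1 := Complex.normSq_nonneg a.1
  have h2 := Complex.normSq_nonneg a.2
  have e1 : Complex.normSq a.1 = 0 := by linarith
  have e2 : Complex.normSq a.2 = 0 := by linarith
  exact Prod.ext (Complex.normSq_eq_zero.1 e1) (Complex.normSq_eq_zero.1 e2)

lemma cramer (u d v : ℂ × ℂ) : cr u d • v = cr v d • u + cr u v • d := by
  ext <;> simp [cr] <;> ring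

lemma prop_of_cr {a b : ℂ × ℂ} (ha : a ≠ 0) (h : cr a b = 0) : ∃ l : ℂ, b = l • a := by
  have h1 := cramer a (dd a) b
  rw [h, zero_smul, add_zero] at h1
  refine ⟨(cr a (dd a))⁻¹ * cr b (dd a), ?_⟩
  rw [mul_smul, ← h1, smul_smul, inv_mul_cancel₀ (cr_dd_ne ha), one_smul]

lemma cr_trans {a b c : ℂ × ℂ} (hb : b ≠ 0) (h1 : cr a b = 0) (h2 : cr b c = 0) : cr a c = 0 := by
  obtain ⟨l, rfl⟩ := prop_of_cr hb h2
  rw [cr_smul_right, h1, mul_zero]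

lemma cr_dd_ne' {a b : ℂ × ℂ} (ha : a ≠ 0) (hb : b ≠ 0) (h : cr a b = 0) : cr b (dd a) ≠ 0 := by
  intro h'
  exact cr_dd_ne ha (cr_trans hb h h')

lemma cont_cr (a : ℂ × ℂ) {α : Type*} [TopologicalSpace α] {g : α → ℂ × ℂ} (hg : Continuous g) :
    Continuous fun x => cr a (g x) := by
  unfold cr; fun_prop

lemma exists_Q_ne {m : ℕ} (r : Fin m → ℕ) (u : Fin m → ℂ × ℂ) (hu : ∀ i, u i ≠ 0) :
    ∃ v, QQ r u v ≠ 0 := by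
  obtain ⟨h, hh⟩ := Infinite.exists_notMem_finset (Finset.univ.image fun i => (u i).2 / (u i).1)
  refine ⟨(1, h), Finset.prod_ne_zero_iff.2 fun i _ => pow_ne_zero _ ?_⟩
  intro h0
  simp only [cr, mul_one] at h0
  by_cases h1 : (u i).1 = 0
  · apply hu i
    rw [h1] at h0
    exact Prod.ext h1 (by simpa using h0)
  · apply hh
    simp only [Finset.mem_image, Finset.mem_univ, true_and]
    refine ⟨i, ?_⟩
    rw [div_eq_iff h1]; linear_combination h0

lemma zero_of_pow_mul {n : ℕ} {g : ℂ → ℂ} (hg : Continuous g) (h : ∀ x, x ^ n * g x = 0) :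
    g 0 = 0 := by
  have : g = fun _ => 0 := by
    refine Continuous.ext_on (s := {0}ᶜ) (dense_compl_singleton (0 : ℂ)) hg continuous_const ?_
    intro x hx
    have := h x
    simpa [pow_ne_zero n hx] using (mul_eq_zero.1 this).resolve_left (pow_ne_zero n hx)
  rw [this]

lemma ord_aux {a b : ℕ} {A B : ℂ → ℂ} (hA : Continuous A) (hB : Continuous B)
    (h : ∀ x, x ^ a * A x = x ^ b * B x) (hA0 : A 0 ≠ 0) : b ≤ a := by
  by_contra hab
  push Not at hab
  obtain ⟨k, rfl⟩ := Nat.exists_eq_add_of_lt hab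
  apply hA0
  have := zero_of_pow_mul (n := a) (g := fun x => A x - x ^ (k + 1) * B x) (by fun_prop) (by
    intro x
    have := h x
    rw [mul_sub, this]; ring)
  simpa using this

lemma QQ_line {m : ℕ} (r : Fin m → ℕ) (u : Fin m → ℂ × ℂ) (a e : ℂ × ℂ) (i : Fin m)
    (h : cr (u i) a = 0) (x : ℂ) :
    QQ r u (a + x • e) = x ^ r i * (cr (u i) e ^ r i *
      ∏ j ∈ Finset.univ.erase i, cr (u j) (a + x • e) ^ r j) := by
  rw [QQ, ← Finset.mul_prod_erase _ _ (Finset.mem_univ i), cr_add_right, h, cr_smul_right, zero_add,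
    mul_pow, mul_assoc]

lemma divisor {m : ℕ} (r : Fin m → ℕ) (hr : ∀ i, 0 < r i) (u u' : Fin m → ℂ × ℂ)
    (hu : ∀ i, u i ≠ 0) (hu' : ∀ i, u' i ≠ 0) (hd : ∀ i j, i ≠ j → cr (u i) (u j) ≠ 0)
    (c c' : ℂ) (hc : c ≠ 0) (hc' : c' ≠ 0) (h : ∀ v, c * QQ r u v = c' * QQ r u' v) :
    ∃ ρ : Equiv.Perm (Fin m), ∀ i, cr (u i) (u' (ρ i)) = 0 ∧ r (ρ i) = r i := by
  have h1 : ∀ i, ∃ j, cr (u i) (u' j) = 0 := by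
    intro i
    have h2 := h (u i)
    have h3 : QQ r u (u i) = 0 :=
      Finset.prod_eq_zero (Finset.mem_univ i) (by rw [cr_self, zero_pow (hr i).ne'])
    rw [h3, mul_zero] at h2
    have h4 := (mul_eq_zero.1 h2.symm).resolve_left hc'
    obtain ⟨j, -, hj⟩ := Finset.prod_eq_zero_iff.1 h4
    exact ⟨j, cr_comm_zero (pow_eq_zero_iff (hr j).ne' |>.1 hj)⟩
  choose ρ hρ using h1
  have hinj : Function.Injective ρ := by
    intro i j hij
    by_contra hne
    exact hd i j hne (cr_trans (hu' (ρ i)) (hρ i) (by rw [hij]; exact cr_comm_zero (hρ j)))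
  have hbij := Finite.injective_iff_bijective.1 hinj
  refine ⟨Equiv.ofBijective ρ hbij, fun i => ⟨hρ i, ?_⟩⟩
  change r (ρ i) = r i
  have key : ∀ x : ℂ, x ^ r i * (c * (cr (u i) (dd (u i)) ^ r i *
      ∏ j ∈ Finset.univ.erase i, cr (u j) (u i + x • dd (u i)) ^ r j)) =
      x ^ r (ρ i) * (c' * (cr (u' (ρ i)) (dd (u i)) ^ r (ρ i) *
      ∏ j ∈ Finset.univ.erase (ρ i), cr (u' j) (u i + x • dd (u i)) ^ r j)) := by
    intro x
    have := h (u i + x • dd (u i))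
    rw [QQ_line r u _ _ i (cr_self _), QQ_line r u' _ _ (ρ i) (cr_comm_zero (hρ i))] at this
    linear_combination this
  have cA : ∀ (k : ℂ) (w : Fin m → ℂ × ℂ) (s : Finset (Fin m)) (l : ℂ), Continuous fun x : ℂ =>
      k * (l * ∏ j ∈ s, cr (w j) (u i + x • dd (u i)) ^ r j) := by
    intro k w s l
    unfold cr
    fun_prop
  refine le_antisymm (ord_aux (cA _ _ _ _) (cA _ _ _ _) key ?_)
    (ord_aux (cA _ _ _ _) (cA _ _ _ _) (fun x => (key x).symm) ?_)
  · refine mul_ne_zero hc (mul_ne_zero (pow_ne_zero _ (cr_dd_ne (hu i)))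
      (Finset.prod_ne_zero_iff.2 fun j hj => pow_ne_zero _ ?_))
    rw [zero_smul, add_zero]
    exact hd j i (Finset.ne_of_mem_erase hj)
  · refine mul_ne_zero hc' (mul_ne_zero (pow_ne_zero _ (cr_dd_ne' (hu i) (hu' _) (hρ i)))
      (Finset.prod_ne_zero_iff.2 fun j hj => pow_ne_zero _ ?_))
    rw [zero_smul, add_zero]
    obtain ⟨k, rfl⟩ := hbij.2 j
    intro h0
    refine hd k i ?_ (cr_trans (hu' _) (hρ k) h0)
    rintro rfl
    exact Finset.ne_of_mem_erase hj rfl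

lemma QQ_smul {m : ℕ} (r : Fin m → ℕ) (u : Fin m → ℂ × ℂ) (α : Fin m → ℂ) (v : ℂ × ℂ) :
    QQ r (fun i => α i • u i) v = (∏ i, α i ^ r i) * QQ r u v := by
  simp only [QQ, cr_smul_left, mul_pow, Finset.prod_mul_distrib]

lemma QQ_perm {m : ℕ} (r : Fin m → ℕ) (u : Fin m → ℂ × ℂ) (σ : Equiv.Perm (Fin m))
    (hσ : ∀ i, r (σ i) = r i) (v : ℂ × ℂ) : QQ r (fun i => u (σ i)) v = QQ r u v := by
  unfold QQ
  refine Fintype.prod_equiv σ _ _ fun i => ?_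
  rw [hσ]

lemma QQ_cj {m : ℕ} (r : Fin m → ℕ) (u : Fin m → ℂ × ℂ) (v : ℂ × ℂ) :
    QQ r (fun i => cj (u i)) (cj v) = starRingEnd ℂ (QQ r u v) := by
  simp only [QQ, cr_cj, map_prod, map_pow]

lemma QQ_real {m : ℕ} (r : Fin m → ℕ) (u : Fin m → ℂ × ℂ) (σ : Equiv.Perm (Fin m))
    (hσ : ∀ i, r (σ i) = r i) (hu : ∀ i, cj (u i) = u (σ i)) (v : ℂ × ℂ) :
    QQ r u (cj v) = starRingEnd ℂ (QQ r u v) := by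
  rw [← QQ_cj, ← QQ_perm r u σ hσ]
  simp only [hu]

lemma GG_formula (x : Fin 9 → ℝ) (v : ℂ × ℂ) :
    GG x v = ∑ k : Fin 9, (x k : ℂ) * (Nat.choose 8 k : ℂ) * v.1 ^ (8 - (k : ℕ)) * v.2 ^ (k : ℕ) := by
  simp [GG, mapC, polyOf]

lemma GG_cj (x : Fin 9 → ℝ) (v : ℂ × ℂ) : GG x (cj v) = starRingEnd ℂ (GG x v) := by
  simp [GG_formula, cj, map_sum]

/-- the exponent of the `k`-th monomial -/
def mon (k : ℕ) : Fin 2 →₀ ℕ := Finsupp.single 0 (8 - k) + Finsupp.single 1 k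

lemma coeff_polyOf (x : Fin 9 → ℝ) (k : Fin 9) :
    coeff (mon k) (polyOf x) = x k * (Nat.choose 8 k : ℝ) := by
  classical
  have : polyOf x = ∑ k : Fin 9, monomial (mon k) (x k * (Nat.choose 8 k : ℝ)) := by
    unfold polyOf mon
    refine Finset.sum_congr rfl fun k _ => ?_
    rw [X_pow_eq_monomial, X_pow_eq_monomial, C_mul_monomial, monomial_mul]
    simp
  rw [this, coeff_sum]
  simp only [coeff_monomial]
  rw [Finset.sum_eq_single k]
  · simp
  · intro b _ hb
    rw [if_neg]
    intro h
    apply hb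
    have := DFunLike.congr_fun h 1
    simp [mon] at this
    exact Fin.ext this
  · simp

lemma GG_inj {x y : Fin 9 → ℝ} (h : ∀ v, GG x v = GG y v) : x = y := by
  have h1 : mapC (polyOf x) = mapC (polyOf y) := by
    apply MvPolynomial.funext
    intro g
    have : g = ![(g 0, g 1).1, (g 0, g 1).2] := by ext i; fin_cases i <;> rfl
    rw [this]
    exact h (g 0, g 1)
  have h2 : polyOf x = polyOf y := map_injective _ (algebraMap ℝ ℂ).injective h1
  funext k
  have h3 := coeff_polyOf x k
  rw [h2, coeff_polyOf] at h3
  have : (Nat.choose 8 k : ℝ) ≠ 0 := by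
    have : 0 < Nat.choose 8 k := Nat.choose_pos (by omega)
    positivity
  exact (mul_right_cancel₀ this h3).symm

lemma polyOf_homog (x : Fin 9 → ℝ) : (mapC (polyOf x)).IsHomogeneous 8 := by
  apply IsHomogeneous.map
  unfold polyOf
  refine IsHomogeneous.sum _ _ _ fun k _ => ?_
  have := ((isHomogeneous_C (Fin 2) (x k * (Nat.choose 8 k : ℝ))).mul
    (isHomogeneous_X_pow (R := ℝ) (0 : Fin 2) (8 - (k : ℕ)))).mul
    (isHomogeneous_X_pow (R := ℝ) (1 : Fin 2) (k : ℕ))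
  convert this using 1
  omega

lemma lin_homog (a b : ℂ) : (lin a b).IsHomogeneous 1 := by
  unfold lin
  exact ((isHomogeneous_C_mul_X _ _)).sub (isHomogeneous_C_mul_X _ _)

/-- polynomial version -/
def PP {m : ℕ} (r : Fin m → ℕ) (c : ℂ) (u : Fin m → ℂ × ℂ) : MvPolynomial (Fin 2) ℂ :=
  C c * ∏ i, lin (u i).1 (u i).2 ^ r i

lemma eval_PP {m : ℕ} (r : Fin m → ℕ) (c : ℂ) (u : Fin m → ℂ × ℂ) (v : ℂ × ℂ) :
    eval ![v.1, v.2] (PP r c u) = c * QQ r u v := by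
  simp [PP, QQ, lin, cr, map_prod]

lemma poly_iff {m : ℕ} (r : Fin m → ℕ) (c : ℂ) (u : Fin m → ℂ × ℂ) (x : Fin 9 → ℝ) :
    mapC (polyOf x) = PP r c u ↔ ∀ v, GG x v = c * QQ r u v := by
  constructor
  · intro h v
    rw [← eval_PP, ← h]; rfl
  · intro h
    apply MvPolynomial.funext
    intro g
    have : g = ![(g 0, g 1).1, (g 0, g 1).2] := by ext i; fin_cases i <;> rfl
    rw [this, eval_PP]
    exact h (g 0, g 1)

lemma PP_homog {m : ℕ} (r : Fin m → ℕ) (c : ℂ) (u : Fin m → ℂ × ℂ) :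
    (PP r c u).IsHomogeneous (∑ i, r i) := by
  have := (isHomogeneous_C (Fin 2) c).mul (IsHomogeneous.prod Finset.univ
    (fun i => lin (u i).1 (u i).2 ^ r i) (fun i => 1 * r i) fun i _ => (lin_homog _ _).pow _)
  simpa [PP] using this

lemma sum_r {m : ℕ} (r : Fin m → ℕ) (c : ℂ) (hc : c ≠ 0) (u : Fin m → ℂ × ℂ) (hu : ∀ i, u i ≠ 0)
    (x : Fin 9 → ℝ) (h : ∀ v, GG x v = c * QQ r u v) : ∑ i, r i = 8 := by
  have h1 := (poly_iff r c u x).2 h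
  have h2 := PP_homog r c u
  rw [← h1] at h2
  refine h2.inj_right (polyOf_homog x) ?_
  intro h0
  obtain ⟨v, hv⟩ := exists_Q_ne r u hu
  have := h v
  rw [GG, h0, map_zero] at this
  exact mul_ne_zero hc hv this.symm

/-- coefficient vector of a complex form (real parts) -/
def coefs (P : MvPolynomial (Fin 2) ℂ) (k : Fin 9) : ℝ :=
  (coeff (mon k) P).re / (Nat.choose 8 k : ℝ)

lemma coefs_spec (P : MvPolynomial (Fin 2) ℂ) (hP : P.IsHomogeneous 8)
    (hreal : ∀ v : ℂ × ℂ, eval ![(cj v).1, (cj v).2] P = starRingEnd ℂ (eval ![v.1, v.2] P)) :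
    mapC (polyOf (coefs P)) = P := by
  have hconj : MvPolynomial.map (starRingEnd ℂ) P = P := by
    apply MvPolynomial.funext
    intro g
    have h := hreal (cj (g 0, g 1))
    have e1 : ![(cj (cj (g 0, g 1))).1, (cj (cj (g 0, g 1))).2] = g := by
      rw [cj_cj]; ext i; fin_cases i <;> rfl
    rw [e1] at h
    rw [h, eval_map, ← eval₂_id, hom_eval₂]
    congr 1
    funext i; fin_cases i <;> simp [cj]
  have hre : ∀ n, starRingEnd ℂ (coeff n P) = coeff n P := by
    intro n
    conv_rhs => rw [← hconj]
    rw [coeff_map]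
  ext1 n
  by_cases hn : n.degree = 8
  · have hk : n 1 < 9 := by
      rw [Finsupp.degree_eq_sum] at hn
      simp at hn; omega
    have : n = mon ((⟨n 1, hk⟩ : Fin 9) : ℕ) := by
      rw [Finsupp.degree_eq_sum] at hn
      simp at hn
      ext i; fin_cases i
      · simp [mon]; omega
      · simp [mon]
    rw [this]
    unfold mapC
    rw [coeff_map, coeff_polyOf, coefs]
    have h8 : (Nat.choose 8 (n 1) : ℝ) ≠ 0 := by
      have : 0 < Nat.choose 8 (n 1) := Nat.choose_pos (by omega)
      positivity
    rw [div_mul_cancel₀ _ h8]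
    exact Complex.conj_eq_iff_re.1 (hre _)
  · rw [(polyOf_homog _).coeff_eq_zero hn, hP.coeff_eq_zero hn]

/-- moved roots -/
def ut {m : ℕ} (u : Fin m → ℂ × ℂ) (t : Fin m → ℂ) (i : Fin m) : ℂ × ℂ := u i + t i • dd (u i)

/-- real coordinates to conjugation-symmetric complex coordinates -/
def tau {m : ℕ} (σ : Equiv.Perm (Fin m)) (p : Fin (m + 1) → ℝ) (i : Fin m) : ℂ :=
  (((p i.succ + p (σ i).succ) / 2 : ℝ) : ℂ) + (((p i.succ - p (σ i).succ) / 2 : ℝ) : ℂ) * Complex.I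

/-- the parametrization -/
def ff {m : ℕ} (r : Fin m → ℕ) (u : Fin m → ℂ × ℂ) (σ : Equiv.Perm (Fin m))
    (p : Fin (m + 1) → ℝ) : Fin 9 → ℝ := coefs (PP r (p 0 : ℂ) (ut u (tau σ p)))

/-- normalized root data -/
structure Dat {m : ℕ} (r : Fin m → ℕ) (u : Fin m → ℂ × ℂ) (σ : Equiv.Perm (Fin m)) : Prop where
  hr : ∀ i, 0 < r i
  h2 : ∀ i, σ (σ i) = i
  hrs : ∀ i, r (σ i) = r i
  h0 : ∀ i, u i ≠ 0
  hd : ∀ i j, i ≠ j → cr (u i) (u j) ≠ 0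
  hcj : ∀ i, cj (u i) = u (σ i)
  hsum : ∑ i, r i = 8

lemma cj_ut {m : ℕ} {r : Fin m → ℕ} {u : Fin m → ℂ × ℂ} {σ : Equiv.Perm (Fin m)} (D : Dat r u σ)
    (t : Fin m → ℂ) (ht : ∀ i, t (σ i) = starRingEnd ℂ (t i)) (i : Fin m) :
    cj (ut u t i) = ut u t (σ i) := by
  rw [ut, ut, cj_add, cj_smul, ← dd_cj, D.hcj, ht]

lemma tau_conj {m : ℕ} {σ : Equiv.Perm (Fin m)} (h2 : ∀ i, σ (σ i) = i) (p : Fin (m + 1) → ℝ)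
    (i : Fin m) : tau σ p (σ i) = starRingEnd ℂ (tau σ p i) := by
  simp only [tau, h2, map_add, map_mul, Complex.conj_ofReal, Complex.conj_I]
  push_cast
  ring

lemma tau_cons {m : ℕ} {σ : Equiv.Perm (Fin m)} (s : ℝ) (t : Fin m → ℂ)
    (ht : ∀ i, t (σ i) = starRingEnd ℂ (t i)) :
    tau σ (Fin.cons s fun i => (t i).re + (t i).im) = t := by
  funext i
  simp only [tau, Fin.cons_succ, ht]
  apply Complex.ext
  · simp; ring
  · simp

lemma tau_zero {m : ℕ} {σ : Equiv.Perm (Fin m)} {p : Fin (m + 1) → ℝ} (h : tau σ p = 0) (i : Fin m) :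
    p i.succ = 0 := by
  have h1 := congrArg Complex.re (congrFun h i)
  have h2 := congrArg Complex.im (congrFun h i)
  simp [tau] at h1 h2
  linarith

lemma tau_add {m : ℕ} (σ : Equiv.Perm (Fin m)) (p q : Fin (m + 1) → ℝ) (s : ℝ) :
    tau σ (p + s • q) = tau σ p + (s : ℂ) • tau σ q := by
  funext i
  simp [tau]
  ring

lemma tau_cont {m : ℕ} (σ : Equiv.Perm (Fin m)) : Continuous (tau σ) := by
  unfold tau
  fun_prop

lemma ut_zero {m : ℕ} (u : Fin m → ℂ × ℂ) : ut u 0 = u := by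
  funext i; simp [ut]

lemma ut_cont {m : ℕ} (u : Fin m → ℂ × ℂ) (i : Fin m) : Continuous fun t => ut u t i := by
  unfold ut
  fun_prop

lemma GG_ff {m : ℕ} {r : Fin m → ℕ} {u : Fin m → ℂ × ℂ} {σ : Equiv.Perm (Fin m)} (D : Dat r u σ)
    (p : Fin (m + 1) → ℝ) (v : ℂ × ℂ) :
    GG (ff r u σ p) v = (p 0 : ℂ) * QQ r (ut u (tau σ p)) v := by
  revert v
  rw [← poly_iff]
  refine coefs_spec _ ?_ ?_
  · rw [← D.hsum]; exact PP_homog _ _ _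
  · intro v
    rw [eval_PP, eval_PP, QQ_real r _ σ D.hrs (cj_ut D _ (tau_conj D.h2 p))]
    simp

/-- families of polynomials with smooth coefficients -/
def SmoothFam {E : Type*} [NormedAddCommGroup E] [NormedSpace ℝ E]
    (P : E → MvPolynomial (Fin 2) ℂ) : Prop :=
  ∀ n, ContDiff ℝ (⊤ : ℕ∞) fun p => coeff n (P p)

lemma SmoothFam.mul {E : Type*} [NormedAddCommGroup E] [NormedSpace ℝ E]
    {P Q : E → MvPolynomial (Fin 2) ℂ} (hP : SmoothFam P) (hQ : SmoothFam Q) :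
    SmoothFam fun p => P p * Q p := by
  classical
  intro n
  simp only [coeff_mul]
  exact ContDiff.sum fun x _ => (hP _).mul (hQ _)

lemma SmoothFam.const {E : Type*} [NormedAddCommGroup E] [NormedSpace ℝ E]
    (P : MvPolynomial (Fin 2) ℂ) : SmoothFam fun _ : E => P := fun _ => contDiff_const

lemma SmoothFam.C {E : Type*} [NormedAddCommGroup E] [NormedSpace ℝ E] {g : E → ℂ}
    (hg : ContDiff ℝ (⊤ : ℕ∞) g) : SmoothFam fun p : E => MvPolynomial.C (g p) := by
  classical
  intro n
  simp only [coeff_C]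
  split_ifs
  · exact hg
  · exact contDiff_const

lemma SmoothFam.pow {E : Type*} [NormedAddCommGroup E] [NormedSpace ℝ E]
    {P : E → MvPolynomial (Fin 2) ℂ} (hP : SmoothFam P) (n : ℕ) :
    SmoothFam fun p => P p ^ n := by
  induction n with
  | zero => simpa using SmoothFam.const 1
  | succ n ih => simpa only [pow_succ] using ih.mul hP

lemma SmoothFam.prod {E : Type*} [NormedAddCommGroup E] [NormedSpace ℝ E] {ι : Type*} (s : Finset ι)
    {P : ι → E → MvPolynomial (Fin 2) ℂ} (hP : ∀ i, SmoothFam (P i)) :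
    SmoothFam fun p => ∏ i ∈ s, P i p := by
  classical
  induction s using Finset.induction_on with
  | empty => simpa using SmoothFam.const 1
  | insert a s ha ih => simpa only [Finset.prod_insert ha] using (hP a).mul ih

lemma SmoothFam.sub {E : Type*} [NormedAddCommGroup E] [NormedSpace ℝ E]
    {P Q : E → MvPolynomial (Fin 2) ℂ} (hP : SmoothFam P) (hQ : SmoothFam Q) :
    SmoothFam fun p => P p - Q p := by
  intro n
  simp only [coeff_sub]
  exact (hP _).sub (hQ _)

lemma ff_smooth {m : ℕ} (r : Fin m → ℕ) (u : Fin m → ℂ × ℂ) (σ : Equiv.Perm (Fin m)) :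
    ContDiff ℝ (⊤ : ℕ∞) (ff r u σ) := by
  have hof : ContDiff ℝ (⊤ : ℕ∞) (fun x : ℝ => (x : ℂ)) := Complex.ofRealCLM.contDiff
  have hre : ContDiff ℝ (⊤ : ℕ∞) (fun x : ℂ => x.re) := Complex.reCLM.contDiff
  have hp : ∀ j, ContDiff ℝ (⊤ : ℕ∞) fun p : Fin (m + 1) → ℝ => p j := fun j => contDiff_apply ℝ ℝ j
  have ht : ∀ i, ContDiff ℝ (⊤ : ℕ∞) fun p => tau σ p i := by
    intro i
    unfold tau
    exact (hof.comp (((hp _).add (hp _)).div_const _)).add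
      ((hof.comp (((hp _).sub (hp _)).div_const _)).mul contDiff_const)
  have hlin : SmoothFam fun p : Fin (m + 1) → ℝ => PP r (p 0 : ℂ) (ut u (tau σ p)) := by
    unfold PP
    refine (SmoothFam.C (hof.comp (hp 0))).mul (SmoothFam.prod _ fun i => SmoothFam.pow ?_ _)
    unfold lin
    refine (SmoothFam.mul (SmoothFam.C ?_) (SmoothFam.const _)).sub
      (SmoothFam.mul (SmoothFam.C ?_) (SmoothFam.const _))
    · simp only [ut, Prod.snd_add, Prod.smul_snd, smul_eq_mul]
      exact contDiff_const.add ((ht i).mul contDiff_const)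
    · simp only [ut, Prod.fst_add, Prod.smul_fst, smul_eq_mul]
      exact contDiff_const.add ((ht i).mul contDiff_const)
  rw [contDiff_pi]
  intro k
  unfold ff coefs
  exact (hre.comp (hlin _)).div_const _

/-- evaluation as a continuous linear map -/
def GGL (v : ℂ × ℂ) : (Fin 9 → ℝ) →L[ℝ] ℂ :=
  ∑ k : Fin 9, (((Nat.choose 8 k : ℂ) * v.1 ^ (8 - (k : ℕ)) * v.2 ^ (k : ℕ)) •
    Complex.ofRealCLM).comp (ContinuousLinearMap.proj k)

lemma GGL_apply (v : ℂ × ℂ) (x : Fin 9 → ℝ) : GGL v x = GG x v := by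
  rw [GG_formula, GGL, sum_apply]
  refine Finset.sum_congr rfl fun k _ => ?_
  simp; ring

lemma ff_immersion {m : ℕ} {r : Fin m → ℕ} {u : Fin m → ℂ × ℂ} {σ : Equiv.Perm (Fin m)}
    (D : Dat r u σ) (s : ℝ) (hs : s ≠ 0) :
    Function.Injective (fderiv ℝ (ff r u σ) (Fin.cons s fun _ => 0)) := by
  set p0 : Fin (m + 1) → ℝ := Fin.cons s fun _ => 0 with hp0
  have ht0 : tau σ p0 = 0 := by
    funext i; simp [tau, hp0]
  rw [injective_iff_map_eq_zero]
  intro q hq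
  have hf : HasFDerivAt (ff r u σ) (fderiv ℝ (ff r u σ) p0) p0 :=
    ((ff_smooth r u σ).differentiable (by simp)).differentiableAt.hasFDerivAt
  set δ := tau σ q with hδ
  -- the derivative in direction q vanishes
  have key : ∀ v, (q 0 : ℂ) * QQ r u v + s * ∑ i, (∏ j ∈ Finset.univ.erase i, cr (u j) v ^ r j) *
      ((r i : ℂ) * cr (u i) v ^ (r i - 1) * (δ i * cr (dd (u i)) v)) = 0 := by
    intro v
    have hline : HasDerivAt (fun x : ℝ => p0 + x • q) q 0 := by
      simpa using ((hasDerivAt_id (0 : ℝ)).smul_const q).const_add p0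
    have h1 : HasDerivAt (fun x : ℝ => GGL v (ff r u σ (p0 + x • q))) 0 0 := by
      have h2 : HasFDerivAt (fun p => GGL v (ff r u σ p))
          ((GGL v).comp (fderiv ℝ (ff r u σ) p0)) (p0 + (0 : ℝ) • q) := by
        rw [zero_smul, add_zero]
        exact (GGL v).hasFDerivAt.comp p0 hf
      have h3 := h2.comp_hasDerivAt (0 : ℝ) hline
      have h6 : ((GGL v).comp (fderiv ℝ (ff r u σ) p0)) q = 0 := by simp [hq]
      rw [h6] at h3
      exact h3
    have e1 : (fun x : ℝ => GGL v (ff r u σ (p0 + x • q))) = fun x : ℝ =>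
        ((s : ℂ) + x * q 0) * ∏ i, (cr (u i) v + x * (δ i * cr (dd (u i)) v)) ^ r i := by
      funext x
      rw [GGL_apply, GG_ff D, tau_add, ht0]
      congr 1
      · simp [hp0]
      · unfold QQ
        refine Finset.prod_congr rfl fun i _ => ?_
        simp only [ut, cr_add_left, cr_smul_left, Pi.add_apply, Pi.smul_apply, Pi.zero_apply,
          zero_add, smul_eq_mul, hδ]
        ring
    rw [e1] at h1
    have hx : ∀ a b : ℂ, HasDerivAt (fun x : ℝ => a + x * b) b 0 := by
      intro a b
      simpa using ((Complex.ofRealCLM.hasDerivAt (x := (0:ℝ))).mul_const b).const_add a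
    have h4 := (hx s (q 0)).mul (HasDerivAt.fun_finsetProd (u := Finset.univ)
      (f := fun i (x : ℝ) => (cr (u i) v + x * (δ i * cr (dd (u i)) v)) ^ r i)
      (fun i _ => (hx (cr (u i) v) (δ i * cr (dd (u i)) v)).fun_pow (r i)))
    have h5 := h4.unique h1
    simp at h5
    rw [QQ]
    linear_combination h5
  -- each root moves with zero speed
  have hδ0 : ∀ i, δ i = 0 := by
    intro i
    have hlim := zero_of_pow_mul (n := r i - 1) (g := fun x : ℂ =>
      (q 0 : ℂ) * (x * (cr (u i) (dd (u i)) ^ r i *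
        ∏ j ∈ Finset.univ.erase i, cr (u j) (u i + x • dd (u i)) ^ r j)) +
      s * ((∏ j ∈ Finset.univ.erase i, cr (u j) (u i + x • dd (u i)) ^ r j) *
        ((r i : ℂ) * cr (u i) (dd (u i)) ^ (r i - 1) * (δ i * cr (dd (u i)) (u i + x • dd (u i)))) +
        ∑ k ∈ Finset.univ.erase i, x * (cr (u i) (dd (u i)) ^ r i *
          (∏ j ∈ (Finset.univ.erase k).erase i, cr (u j) (u i + x • dd (u i)) ^ r j) *
        ((r k : ℂ) * cr (u k) (u i + x • dd (u i)) ^ (r k - 1) *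
          (δ k * cr (dd (u k)) (u i + x • dd (u i)))))))
      (by unfold cr; fun_prop) (by
        intro x
        have h1 := key (u i + x • dd (u i))
        have hx : x ^ r i = x ^ (r i - 1) * x := by
          rw [← pow_succ, Nat.sub_add_cancel (D.hr i)]
        have hLi : cr (u i) (u i + x • dd (u i)) = x * cr (u i) (dd (u i)) := by
          rw [cr_add_right, cr_self, cr_smul_right, zero_add]
        rw [QQ_line r u _ _ i (cr_self _), ← Finset.add_sum_erase _ _ (Finset.mem_univ i)] at h1
        have h2 : ∀ k ∈ Finset.univ.erase i, (∏ j ∈ Finset.univ.erase k,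
            cr (u j) (u i + x • dd (u i)) ^ r j) *
            ((r k : ℂ) * cr (u k) (u i + x • dd (u i)) ^ (r k - 1) *
              (δ k * cr (dd (u k)) (u i + x • dd (u i)))) =
            x ^ (r i - 1) * (x * (cr (u i) (dd (u i)) ^ r i *
          (∏ j ∈ (Finset.univ.erase k).erase i, cr (u j) (u i + x • dd (u i)) ^ r j) *
        ((r k : ℂ) * cr (u k) (u i + x • dd (u i)) ^ (r k - 1) *
          (δ k * cr (dd (u k)) (u i + x • dd (u i)))))) := by
          intro k hk
          rw [← Finset.mul_prod_erase (Finset.univ.erase k) _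
            (Finset.mem_erase.2 ⟨(Finset.ne_of_mem_erase hk).symm, Finset.mem_univ i⟩), hLi, mul_pow, hx]
          ring
        rw [Finset.sum_congr rfl h2, ← Finset.mul_sum, hx] at h1
        have h3 : cr (u i) (u i + x • dd (u i)) ^ (r i - 1) =
            x ^ (r i - 1) * cr (u i) (dd (u i)) ^ (r i - 1) := by rw [hLi, mul_pow]
        rw [h3] at h1
        linear_combination h1)
    simp only [zero_mul, mul_zero, zero_smul, add_zero, zero_add, Finset.sum_const_zero] at hlim
    have hne : ∀ j ∈ Finset.univ.erase i, cr (u j) (u i) ^ r j ≠ 0 := fun j hj =>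
      pow_ne_zero _ (D.hd j i (Finset.ne_of_mem_erase hj))
    have h1 : (∏ j ∈ Finset.univ.erase i, cr (u j) (u i) ^ r j) ≠ 0 := Finset.prod_ne_zero_iff.2 hne
    have h2 : cr (dd (u i)) (u i) ≠ 0 := fun h => cr_dd_ne (D.h0 i) (cr_comm_zero h)
    have h3 : (s : ℂ) ≠ 0 := by exact_mod_cast hs
    have h4 : (r i : ℂ) ≠ 0 := by exact_mod_cast (D.hr i).ne'
    simpa [h1, h2, h3, h4, cr_dd_ne (D.h0 i)] using hlim
  have hq0 : q 0 = 0 := by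
    obtain ⟨v, hv⟩ := exists_Q_ne r u D.h0
    have := key v
    simp only [hδ0, zero_mul, mul_zero, Finset.sum_const_zero, add_zero] at this
    simpa [hv] using this
  funext j
  refine Fin.cases hq0 (fun i => ?_) j
  exact tau_zero (funext hδ0 : tau σ q = 0) i

lemma locInj {n k : ℕ} (f : (Fin n → ℝ) → (Fin k → ℝ)) (hf : ContDiff ℝ (⊤ : ℕ∞) f) (p : Fin n → ℝ)
    (h : Function.Injective (fderiv ℝ f p)) : ∃ U, IsOpen U ∧ p ∈ U ∧ Set.InjOn f U := by
  have hs : HasStrictFDerivAt f (fderiv ℝ f p) p := hf.contDiffAt.hasStrictFDerivAt (by simp)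
  obtain ⟨g, hg⟩ := LinearMap.exists_leftInverse_of_injective
    ((fderiv ℝ f p) : (Fin n → ℝ) →ₗ[ℝ] (Fin k → ℝ)) (LinearMap.ker_eq_bot.2 h)
  have h1 : HasStrictFDerivAt (fun x => LinearMap.toContinuousLinearMap g (f x))
      ((ContinuousLinearEquiv.refl ℝ (Fin n → ℝ) : (Fin n → ℝ) →L[ℝ] (Fin n → ℝ))) p := by
    have := (LinearMap.toContinuousLinearMap g).hasStrictFDerivAt.comp p hs
    have e : (ContinuousLinearEquiv.refl ℝ (Fin n → ℝ) : (Fin n → ℝ) →L[ℝ] (Fin n → ℝ)) =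
        (LinearMap.toContinuousLinearMap g).comp (fderiv ℝ f p) :=
      ContinuousLinearMap.ext fun x => (LinearMap.congr_fun hg x).symm
    rw [e]
    exact this
  refine ⟨(h1.toOpenPartialHomeomorph _).source, (h1.toOpenPartialHomeomorph _).open_source,
    h1.mem_toOpenPartialHomeomorph_source, ?_⟩
  intro x hx y hy hxy
  refine (h1.toOpenPartialHomeomorph _).injOn hx hy ?_
  rw [h1.toOpenPartialHomeomorph_coe]
  simp [hxy]

lemma QQ_cont {m : ℕ} (r : Fin m → ℕ) (v : ℂ × ℂ) : Continuous fun u : Fin m → ℂ × ℂ => QQ r u v := by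
  unfold QQ cr
  fun_prop

lemma GG_cont (v : ℂ × ℂ) : Continuous fun x => GG x v := by
  exact (GGL v).continuous.congr (GGL_apply v)

lemma real_scalar {m : ℕ} {r : Fin m → ℕ} {u : Fin m → ℂ × ℂ} {σ : Equiv.Perm (Fin m)}
    (hrs : ∀ i, r (σ i) = r i) (h0 : ∀ i, u i ≠ 0) (hcj : ∀ i, cj (u i) = u (σ i))
    (x : Fin 9 → ℝ) (s : ℂ) (h : ∀ v, GG x v = s * QQ r u v) : ((s.re : ℝ) : ℂ) = s := by
  obtain ⟨v, hv⟩ := exists_Q_ne r u h0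
  have h1 := h (cj v)
  rw [GG_cj, h v, QQ_real r u σ hrs hcj, map_mul] at h1
  exact Complex.conj_eq_iff_re.1 (mul_right_cancel₀ ((map_ne_zero _).2 hv) h1)

/-- local coordinates of the roots -/
def tt {m : ℕ} (u u' : Fin m → ℂ × ℂ) (i : Fin m) : ℂ := cr (u i) (u' i) / cr (u' i) (dd (u i))

lemma param {m : ℕ} {r : Fin m → ℕ} {u : Fin m → ℂ × ℂ} {σ : Equiv.Perm (Fin m)} (D : Dat r u σ)
    (u' : Fin m → ℂ × ℂ) (h0 : ∀ i, u' i ≠ 0) (hne : ∀ i, cr (u' i) (dd (u i)) ≠ 0)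
    (hp : ∀ i, cr (cj (u' i)) (u' (σ i)) = 0) (x : Fin 9 → ℝ) (c : ℂ)
    (h : ∀ v, GG x v = c * QQ r u' v) :
    (∀ i, tt u u' (σ i) = starRingEnd ℂ (tt u u' i)) ∧
      ∃ s : ℝ, ∀ v, GG x v = s * QQ r (ut u (tt u u')) v := by
  have hconj : ∀ i, tt u u' (σ i) = starRingEnd ℂ (tt u u' i) := by
    intro i
    obtain ⟨l, hl⟩ := prop_of_cr (cj_ne (h0 i)) (hp i)
    have h1 := hne (σ i)
    have hl0 : l ≠ 0 := by
      rintro rfl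
      rw [zero_smul] at hl
      exact h0 _ hl
    rw [tt, tt, hl, ← D.hcj, dd_cj, cr_smul_left, cr_smul_right, cr_cj, cr_cj, map_div₀,
      mul_div_mul_left _ _ hl0]
  refine ⟨hconj, ?_⟩
  set α : Fin m → ℂ := fun i => cr (u' i) (dd (u i)) / cr (u i) (dd (u i)) with hα
  have hu' : ∀ i, u' i = α i • ut u (tt u u') i := by
    intro i
    have hd := cr_dd_ne (D.h0 i)
    have h1 := cramer (u i) (dd (u i)) (u' i)
    have h2 : u' i = (cr (u i) (dd (u i)))⁻¹ • (cr (u i) (dd (u i)) • u' i) := by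
      rw [smul_smul, inv_mul_cancel₀ hd, one_smul]
    rw [h2, h1, ut, smul_add, smul_add, smul_smul, smul_smul, smul_smul, tt, hα]
    have := hne i
    congr 2
    · field_simp
    · field_simp
  have h2 : ∀ v, GG x v = (c * ∏ i, α i ^ r i) * QQ r (ut u (tt u u')) v := by
    intro v
    rw [h v, mul_assoc, ← QQ_smul, ← funext hu']
  have h3 : ∀ i, ut u (tt u u') i ≠ 0 := by
    intro i hi
    apply h0 i
    rw [hu' i, hi, smul_zero]
  have h4 := real_scalar D.hrs h3 (cj_ut D _ hconj) x _ h2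
  exact ⟨_, fun v => by rw [h4]; exact h2 v⟩

/-- the stratum in terms of the pairing permutation -/
def SS {m : ℕ} (r : Fin m → ℕ) (σ : Equiv.Perm (Fin m)) : Set (Fin 9 → ℝ) :=
  {x | ∃ (c : ℂ) (u : Fin m → ℂ × ℂ), c ≠ 0 ∧ (∀ i, u i ≠ 0) ∧
    (∀ i j, i ≠ j → cr (u i) (u j) ≠ 0) ∧ (∀ v, GG x v = c * QQ r u v) ∧
    ∀ i, cr (cj (u i)) (u (σ i)) = 0}

lemma SS_norm {m : ℕ} {r : Fin m → ℕ} {σ : Equiv.Perm (Fin m)} {x : Fin 9 → ℝ} (hx : x ∈ SS r σ) :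
    ∃ (c : ℂ) (u : Fin m → ℂ × ℂ), (∀ i, ‖u i‖ = 1) ∧ (∀ v, GG x v = c * QQ r u v) ∧
    ∀ i, cr (cj (u i)) (u (σ i)) = 0 := by
  obtain ⟨c, u, hc, h0, hd, h, hp⟩ := hx
  refine ⟨c * ∏ i, (‖u i‖ : ℂ) ^ r i, fun i => ((‖u i‖ : ℂ)⁻¹) • u i, ?_, ?_, ?_⟩
  · intro i
    have := norm_ne_zero_iff.2 (h0 i)
    rw [norm_smul, norm_inv, Complex.norm_real, norm_norm, inv_mul_cancel₀ this]
  · intro v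
    rw [h v, mul_assoc, ← QQ_smul]
    congr 2
    funext i
    have : (‖u i‖ : ℂ) ≠ 0 := by exact_mod_cast norm_ne_zero_iff.2 (h0 i)
    rw [smul_smul, mul_inv_cancel₀ this, one_smul]
  · intro i
    rw [cj_smul, cr_smul_left, cr_smul_right, hp i, mul_zero, mul_zero]

lemma cover {m : ℕ} {r : Fin m → ℕ} {u : Fin m → ℂ × ℂ} {σ : Equiv.Perm (Fin m)} (D : Dat r u σ)
    (s : ℝ) (hs : s ≠ 0) (x0 : Fin 9 → ℝ) (hx0 : ∀ v, GG x0 v = s * QQ r u v)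
    (U : Set (Fin (m + 1) → ℝ)) (hU : U ∈ 𝓝 (Fin.cons s fun _ => 0 : Fin (m + 1) → ℝ)) :
    ∀ᶠ x in 𝓝[SS r σ] x0, x ∈ ff r u σ '' U := by
  by_contra hcon
  rw [Filter.not_eventually] at hcon
  obtain ⟨xs, hxs, hxs'⟩ := exists_seq_forall_of_frequently
    (hcon.and_eventually self_mem_nhdsWithin)
  have hsC : (s : ℂ) ≠ 0 := by exact_mod_cast hs
  have hxlim : Tendsto xs atTop (𝓝 x0) := hxs.mono_right nhdsWithin_le_nhds
  have hN := fun n => SS_norm (hxs' n).2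
  choose c us hn hG hP using hN
  obtain ⟨a, ha, φ, hφ, hlim⟩ := (isCompact_univ_pi fun _ : Fin m =>
    isCompact_sphere (0 : ℂ × ℂ) 1).tendsto_subseq (x := us) (fun n i _ => by simp [hn])
  have hφ' := hφ.tendsto_atTop
  have ha1 : ∀ i, ‖a i‖ = 1 := fun i => by simpa using ha i (Set.mem_univ i)
  have ha0 : ∀ i, a i ≠ 0 := fun i h => by simpa [h] using ha1 i
  have hlimi : ∀ i, Tendsto (fun n => us (φ n) i) atTop (𝓝 (a i)) := fun i =>
    ((continuous_apply i).tendsto a).comp hlim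
  have hxφ : Tendsto (fun n => xs (φ n)) atTop (𝓝 x0) := hxlim.comp hφ'
  have hQlim : ∀ v, Tendsto (fun n => QQ r (us (φ n)) v) atTop (𝓝 (QQ r a v)) := fun v =>
    ((QQ_cont r v).tendsto a).comp hlim
  have hGlim : ∀ v, Tendsto (fun n => GG (xs (φ n)) v) atTop (𝓝 (GG x0 v)) := fun v =>
    ((GG_cont v).tendsto x0).comp hxφ
  -- the limit factorization
  obtain ⟨v1, hv1⟩ := exists_Q_ne r a ha0
  have hclim : Tendsto (fun n => c (φ n)) atTop (𝓝 (GG x0 v1 / QQ r a v1)) := by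
    refine ((hGlim v1).div (hQlim v1) hv1).congr' ?_
    filter_upwards [(hQlim v1).eventually_ne hv1] with n hn
    simp only [Pi.div_apply]
    rw [hG, mul_div_cancel_right₀ _ hn]
  set c0 := GG x0 v1 / QQ r a v1
  have hfac : ∀ v, GG x0 v = c0 * QQ r a v := fun v =>
    tendsto_nhds_unique (hGlim v) ((hclim.mul (hQlim v)).congr fun n => (hG _ v).symm)
  obtain ⟨v0, hv0⟩ := exists_Q_ne r u D.h0
  have hc0 : c0 ≠ 0 := by
    intro h
    have h1 := hfac v0
    rw [hx0, h, zero_mul] at h1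
    exact mul_ne_zero hsC hv0 h1
  obtain ⟨ρ, hρ⟩ := divisor r D.hr u a D.h0 ha0 D.hd s c0 hsC hc0
    (fun v => by rw [← hx0, hfac])
  have hPa : ∀ i, cr (cj (a i)) (a (σ i)) = 0 := by
    intro i
    have hc : Continuous fun w : (ℂ × ℂ) × (ℂ × ℂ) => cr (cj w.1) w.2 := by
      unfold cr cj
      fun_prop
    have h1 := (hc.tendsto (a i, a (σ i))).comp ((hlimi i).prodMk_nhds (hlimi (σ i)))
    refine tendsto_nhds_unique h1 ?_
    simp only [Function.comp_def, hP]
    exact tendsto_const_nhds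
  have hcomm : ∀ i, ρ (σ i) = σ (ρ i) := by
    intro i
    obtain ⟨j, hj⟩ := ρ.surjective (σ (ρ i))
    have h1 : cr (u j) (a (σ (ρ i))) = 0 := by rw [← hj]; exact (hρ j).1
    have h2 : cr (a (σ (ρ i))) (cj (a (ρ i))) = 0 := cr_comm_zero (hPa _)
    have h3 : cr (cj (a (ρ i))) (u (σ i)) = 0 := by
      rw [← D.hcj, cr_cj, cr_comm_zero (hρ i).1, map_zero]
    have h4 := cr_trans (cj_ne (ha0 _)) (cr_trans (ha0 _) h1 h2) h3
    have : j = σ i := by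
      by_contra hne
      exact D.hd _ _ hne h4
    rw [← this, hj]
  -- relabelled roots
  set b : ℕ → Fin m → ℂ × ℂ := fun n i => us (φ n) (ρ i) with hb
  have hblim : ∀ i, Tendsto (fun n => b n i) atTop (𝓝 (a (ρ i))) := fun i => hlimi (ρ i)
  have hb0 : ∀ n i, b n i ≠ 0 := fun n i h => by
    have := hn (φ n) (ρ i)
    rw [show us (φ n) (ρ i) = 0 from h] at this
    simp at this
  have hbP : ∀ n i, cr (cj (b n i)) (b n (σ i)) = 0 := by
    intro n i
    simp only [hb, hcomm]
    exact hP _ _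
  have hbG : ∀ n v, GG (xs (φ n)) v = c (φ n) * QQ r (b n) v := by
    intro n v
    rw [hG, hb, QQ_perm r (us (φ n)) ρ fun i => (hρ i).2]
  have hden : ∀ i, Tendsto (fun n => cr (b n i) (dd (u i))) atTop (𝓝 (cr (a (ρ i)) (dd (u i)))) := by
    intro i
    have hc : Continuous fun w : ℂ × ℂ => cr w (dd (u i)) := by
      unfold cr
      fun_prop
    exact (hc.tendsto _).comp (hblim i)
  have hden0 : ∀ i, cr (a (ρ i)) (dd (u i)) ≠ 0 := fun i => cr_dd_ne' (D.h0 i) (ha0 _) (hρ i).1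
  have htlim : Tendsto (fun n => tt u (b n)) atTop (𝓝 0) := by
    rw [tendsto_pi_nhds]
    intro i
    have h1 : Tendsto (fun n => cr (u i) (b n i)) atTop (𝓝 (cr (u i) (a (ρ i)))) :=
      ((cont_cr (u i) continuous_id).tendsto _).comp (hblim i)
    have h2 := h1.div (hden i) (hden0 i)
    rw [(hρ i).1, zero_div] at h2
    exact h2
  have hne : ∀ᶠ n in atTop, ∀ i, cr (b n i) (dd (u i)) ≠ 0 :=
    eventually_all.2 fun i => (hden i).eventually_ne (hden0 i)
  have hQt : Tendsto (fun n => QQ r (ut u (tt u (b n))) v0) atTop (𝓝 (QQ r u v0)) := by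
    have hc : Continuous fun t => QQ r (ut u t) v0 :=
      (QQ_cont r v0).comp (continuous_pi fun i => ut_cont u i)
    have := (hc.tendsto 0).comp htlim
    rwa [ut_zero] at this
  have hslim : Tendsto (fun n => (GG (xs (φ n)) v0 / QQ r (ut u (tt u (b n))) v0).re) atTop (𝓝 s) := by
    have h1 := (hGlim v0).div hQt hv0
    rw [hx0, mul_div_cancel_right₀ _ hv0] at h1
    exact (Complex.continuous_re.tendsto _).comp h1
  have hplim : Tendsto (fun n => (Fin.cons (GG (xs (φ n)) v0 / QQ r (ut u (tt u (b n))) v0).re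
      (fun i => (tt u (b n) i).re + (tt u (b n) i).im) : Fin (m + 1) → ℝ)) atTop
      (𝓝 (Fin.cons s fun _ => 0)) := by
    rw [tendsto_pi_nhds]
    intro j
    refine Fin.cases ?_ (fun i => ?_) j
    · simpa using hslim
    · simp only [Fin.cons_succ]
      have hc : Continuous fun t : Fin m → ℂ => (t i).re + (t i).im := by fun_prop
      have h1 := (hc.tendsto 0).comp htlim
      simp only [Pi.zero_apply, Complex.zero_re, Complex.zero_im, add_zero] at h1
      exact h1
  obtain ⟨n, hnU, hnd, hnQ⟩ := ((hplim.eventually hU).and (hne.and (hQt.eventually_ne hv0))).exists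
  obtain ⟨hconj, s', hs'⟩ := param D (b n) (hb0 n) hnd (hbP n) _ _ (hbG n)
  apply (hxs' (φ n)).1
  refine ⟨_, hnU, ?_⟩
  apply GG_inj
  intro v
  rw [GG_ff D, tau_cons _ _ hconj, hs' v, Fin.cons_zero, hs' v0, mul_div_cancel_right₀ _ hnQ,
    Complex.ofReal_re]

/-- canonical representative of a projective point -/
def nrm (a : ℂ × ℂ) : ℂ × ℂ := if a.2 = 0 then (1, 0) else (a.1 / a.2, 1)

lemma nrm_smul (a : ℂ × ℂ) (l : ℂ) (hl : l ≠ 0) : nrm (l • a) = nrm a := by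
  unfold nrm
  by_cases h : a.2 = 0
  · simp [h]
  · simp [h, hl, mul_div_mul_left]

lemma nrm_cj (a : ℂ × ℂ) : nrm (cj a) = cj (nrm a) := by
  unfold nrm
  by_cases h : a.2 = 0
  · simp [h, cj]
  · simp [h, cj]

lemma nrm_ne (a : ℂ × ℂ) : nrm a ≠ 0 := by
  unfold nrm
  split_ifs <;> simp

lemma eq_nrm {a : ℂ × ℂ} (ha : a ≠ 0) : ∃ l : ℂ, l ≠ 0 ∧ a = l • nrm a := by
  unfold nrm
  by_cases h : a.2 = 0
  · refine ⟨a.1, fun h1 => ha (Prod.ext h1 h), ?_⟩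
    rw [if_pos h]
    exact Prod.ext (by simp) (by simp [h])
  · refine ⟨a.2, h, ?_⟩
    rw [if_neg h]
    exact Prod.ext (by simp; field_simp) (by simp)

lemma normalize_data {m : ℕ} {r : Fin m → ℕ} (hr : ∀ i, 0 < r i) {x0 : Fin 9 → ℝ} {c : ℂ} (hc : c ≠ 0)
    {u0 : Fin m → ℂ × ℂ} (h0 : ∀ i, u0 i ≠ 0) (hd : ∀ i j, i ≠ j → cr (u0 i) (u0 j) ≠ 0)
    (h : ∀ v, GG x0 v = c * QQ r u0 v) :
    ∃ (σ : Equiv.Perm (Fin m)) (u : Fin m → ℂ × ℂ) (s : ℝ), Dat r u σ ∧ s ≠ 0 ∧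
      (∀ v, GG x0 v = s * QQ r u v) ∧ (∀ i, cr (cj (u0 i)) (u0 (σ i)) = 0) := by
  obtain ⟨σ, hσ⟩ := divisor r hr u0 (fun i => cj (u0 i)) h0 (fun i => cj_ne (h0 i)) hd c
    (starRingEnd ℂ c) hc ((map_ne_zero _).2 hc) (by
      intro v
      have h1 := GG_cj x0 (cj v)
      rw [cj_cj, h, h, map_mul, ← QQ_cj, cj_cj] at h1
      exact h1)
  have hp : ∀ i, cr (cj (u0 i)) (u0 (σ i)) = 0 := by
    intro i
    have := congrArg (starRingEnd ℂ) (hσ i).1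
    rwa [← cr_cj, cj_cj, map_zero] at this
  choose α hα0 hα using fun i => eq_nrm (h0 i)
  have hcjn : ∀ i, cj (nrm (u0 i)) = nrm (u0 (σ i)) := by
    intro i
    obtain ⟨l, hl⟩ := prop_of_cr (cj_ne (h0 i)) (hp i)
    have hl0 : l ≠ 0 := by
      rintro rfl
      rw [zero_smul] at hl
      exact h0 _ hl
    rw [hl, nrm_smul _ _ hl0, nrm_cj]
  have h2 : ∀ i, σ (σ i) = i := by
    intro i
    by_contra hne
    have h3 := hp (σ i)
    have h4 := congrArg (starRingEnd ℂ) (hp i)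
    rw [← cr_cj, cj_cj, map_zero] at h4
    exact hd _ _ hne (cr_comm_zero (cr_trans (cj_ne (h0 _)) h4 h3))
  have hG : ∀ v, GG x0 v = (c * ∏ i, α i ^ r i) * QQ r (fun i => nrm (u0 i)) v := by
    intro v
    rw [h v, mul_assoc, ← QQ_smul, ← funext hα]
  have hs0 : c * ∏ i, α i ^ r i ≠ 0 :=
    mul_ne_zero hc (Finset.prod_ne_zero_iff.2 fun i _ => pow_ne_zero _ (hα0 i))
  have hre := real_scalar (fun i => (hσ i).2) (fun i => nrm_ne (u0 i)) hcjn x0 _ hG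
  refine ⟨σ, fun i => nrm (u0 i), (c * ∏ i, α i ^ r i).re, ⟨hr, h2, fun i => (hσ i).2,
    fun i => nrm_ne _, ?_, hcjn, sum_r r c hc u0 h0 x0 h⟩, ?_, ?_, hp⟩
  · intro i j hij h3
    apply hd i j hij
    rw [hα i, hα j, cr_smul_left, cr_smul_right, h3, mul_zero, mul_zero]
  · intro h3
    rw [h3] at hre
    exact hs0 (by simpa using hre.symm)
  · intro v
    rw [hre]; exact hG v

lemma ff_mem {m : ℕ} {r : Fin m → ℕ} {u : Fin m → ℂ × ℂ} {σ : Equiv.Perm (Fin m)} (D : Dat r u σ)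
    (s : ℝ) (hs : s ≠ 0) :
    ∀ᶠ p in 𝓝 (Fin.cons s fun _ => 0 : Fin (m + 1) → ℝ), ff r u σ p ∈ SS r σ := by
  set p0 : Fin (m + 1) → ℝ := Fin.cons s fun _ => 0 with hp0
  have ht0 : tau σ p0 = 0 := by
    funext i; simp [tau, hp0]
  have hcont : ∀ i, Continuous fun p => ut u (tau σ p) i := fun i =>
    (ut_cont u i).comp (tau_cont σ)
  have h1 : ∀ᶠ p in 𝓝 p0, p 0 ≠ 0 :=
    ((continuous_apply (0 : Fin (m + 1))).tendsto p0).eventually_ne (by simpa [hp0] using hs)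
  have h2 : ∀ᶠ p in 𝓝 p0, ∀ i, ut u (tau σ p) i ≠ 0 :=
    eventually_all.2 fun i => ((hcont i).tendsto p0).eventually_ne (by
      rw [ht0, ut_zero]; exact D.h0 i)
  have h3 : ∀ᶠ p in 𝓝 p0, ∀ i j, i ≠ j → cr (ut u (tau σ p) i) (ut u (tau σ p) j) ≠ 0 := by
    refine eventually_all.2 fun i => eventually_all.2 fun j => ?_
    by_cases hij : i = j
    · simp [hij]
    · have hc : Continuous fun p => cr (ut u (tau σ p) i) (ut u (tau σ p) j) := by
        have hi := hcont i
        have hj := hcont j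
        exact (hi.snd.mul hj.fst).sub (hi.fst.mul hj.snd)
      filter_upwards [(hc.tendsto p0).eventually_ne (by
        rw [ht0, ut_zero]; exact D.hd i j hij)] with p hp _ using hp
  filter_upwards [h1, h2, h3] with p hp1 hp2 hp3
  refine ⟨(p 0 : ℂ), ut u (tau σ p), by exact_mod_cast hp1, hp2, hp3, GG_ff D p, fun i => ?_⟩
  rw [cj_ut D _ (tau_conj D.h2 p), cr_self]

lemma pair_iff {m : ℕ} {u : Fin m → ℂ × ℂ} {σ : Equiv.Perm (Fin m)} (h0 : ∀ i, u i ≠ 0)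
    (hd : ∀ i j, i ≠ j → cr (u i) (u j) ≠ 0) (hp : ∀ i, cr (cj (u i)) (u (σ i)) = 0) (i j : Fin m) :
    cr (cj (u i)) (u j) = 0 ↔ j = σ i := by
  constructor
  · intro h
    by_contra hne
    exact hd _ _ hne (cr_trans (cj_ne (h0 i)) (cr_comm_zero h) (hp i))
  · rintro rfl
    exact hp i

lemma stratum_iff {m : ℕ} (r : Fin m → ℕ) (z w : Fin m → ℂ) (x : Fin 9 → ℝ) :
    x ∈ stratum m r z w ↔ ∃ (c : ℂ) (u : Fin m → ℂ × ℂ), c ≠ 0 ∧ (∀ i, u i ≠ 0) ∧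
    (∀ i j, i ≠ j → cr (u i) (u j) ≠ 0) ∧ (∀ v, GG x v = c * QQ r u v) ∧
    ∀ i j, conjPaired z w i j ↔ cr (cj (u i)) (u j) = 0 := by
  have hpair : ∀ (u : Fin m → ℂ × ℂ) i j, conjPaired (fun i => (u i).1) (fun i => (u i).2) i j ↔
      cr (cj (u i)) (u j) = 0 := by
    intro u i j
    simp only [conjPaired, cr, cj]
    constructor
    · intro h; linear_combination -h
    · intro h; linear_combination -h
  constructor
  · rintro ⟨c, z', w', hc, h0, hd, hf, hp⟩
    refine ⟨c, fun i => (z' i, w' i), hc, ?_, ?_, ?_, ?_⟩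
    · intro i h
      exact h0 i ⟨congrArg Prod.fst h, congrArg Prod.snd h⟩
    · intro i j hij h
      apply hd i j hij
      simp only [cr] at h
      linear_combination -h
    · exact (poly_iff r c _ x).1 hf
    · intro i j
      rw [hp i j]
      exact hpair (fun i => (z' i, w' i)) i j
  · rintro ⟨c, u, hc, h0, hd, hf, hp⟩
    refine ⟨c, fun i => (u i).1, fun i => (u i).2, hc, ?_, ?_, ?_, ?_⟩
    · rintro i ⟨h1, h2⟩
      exact h0 i (Prod.ext h1 h2)
    · intro i j hij h
      apply hd i j hij
      simp only [cr]
      linear_combination -h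
    · exact (poly_iff r c _ x).2 hf
    · intro i j
      rw [hp i j, hpair]

/-- if the nonzero octic v has exactly k = m distinct complex
projective roots, then its root-type stratum in V₈ ≅ ℝ⁹ is a smooth
submanifold of dimension k + 1: through each of its points it is covered by an
injective smooth parametrization by k+1 real parameters which is immersive and
fills out a relative neighborhood in the stratum. -/
theorem stratum_dimension
    (m : ℕ) (r : Fin m → ℕ) (z w : Fin m → ℂ) (c : ℂ) (v : Fin 9 → ℝ)
    (hc : c ≠ 0) (hr : ∀ i, 0 < r i)
    (hnz : ∀ i, ¬(z i = 0 ∧ w i = 0))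
    (hdist : ∀ i j, i ≠ j → z i * w j ≠ z j * w i)
    (hfac : mapC (polyOf v) = MvPolynomial.C c * ∏ i, (lin (z i) (w i)) ^ (r i)) :
    ∀ x0 ∈ stratum m r z w,
      ∃ (f : (Fin (m + 1) → ℝ) → (Fin 9 → ℝ)) (U : Set (Fin (m + 1) → ℝ))
        (p0 : Fin (m + 1) → ℝ) (V : Set (Fin 9 → ℝ)),
        IsOpen U ∧ IsOpen V ∧ p0 ∈ U ∧ x0 ∈ V ∧ f p0 = x0 ∧
        ContDiffOn ℝ (⊤ : ℕ∞) f U ∧ Set.InjOn f U ∧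
        f '' U = stratum m r z w ∩ V ∧
        Function.Injective (fderiv ℝ f p0) := by
  intro x0 hx0
  obtain ⟨c0, u0, hc0, h0, hd, hf, hp⟩ := (stratum_iff r z w x0).1 hx0
  obtain ⟨σ, u, s, D, hs, hG, hσ⟩ := normalize_data hr hc0 h0 hd hf
  have hS : stratum m r z w = SS r σ := by
    ext x
    rw [stratum_iff]
    have hp' : ∀ i j, conjPaired z w i j ↔ j = σ i := fun i j =>
      (hp i j).trans (pair_iff h0 hd hσ i j)
    constructor
    · rintro ⟨c, u', h1, h2, h3, h4, h5⟩
      exact ⟨c, u', h1, h2, h3, h4, fun i => (h5 i (σ i)).1 ((hp' i (σ i)).2 rfl)⟩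
    · rintro ⟨c, u', h1, h2, h3, h4, h5⟩
      exact ⟨c, u', h1, h2, h3, h4, fun i j => (hp' i j).trans (pair_iff h2 h3 h5 i j).symm⟩
  rw [hS]
  have himm := ff_immersion D s hs
  have hsm := ff_smooth r u σ
  obtain ⟨U1, hU1, hp1, hinj⟩ := locInj (ff r u σ) hsm _ himm
  obtain ⟨U2, hU2sub, hU2, hp2⟩ := eventually_nhds_iff.1 (ff_mem D s hs)
  have hcov := cover D s hs x0 hG (U1 ∩ U2) ((hU1.inter hU2).mem_nhds ⟨hp1, hp2⟩)
  obtain ⟨V, hV, hxV, hVsub⟩ := mem_nhdsWithin.1 hcov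
  have hfp : ff r u σ (Fin.cons s fun _ => 0) = x0 := by
    apply GG_inj
    intro v
    rw [GG_ff D, hG]
    have ht0 : tau σ (Fin.cons s fun _ => 0) = 0 := by
      funext i; simp [tau]
    rw [ht0, ut_zero, Fin.cons_zero]
  refine ⟨ff r u σ, (U1 ∩ U2) ∩ ff r u σ ⁻¹' V, Fin.cons s fun _ => 0, V,
    (hU1.inter hU2).inter (hV.preimage hsm.continuous), hV, ⟨⟨hp1, hp2⟩, ?_⟩, hxV, hfp,
    hsm.contDiffOn, hinj.mono fun p hp => hp.1.1, ?_, himm⟩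
  · rw [Set.mem_preimage, hfp]; exact hxV
  · ext x
    constructor
    · rintro ⟨p, ⟨⟨_, hp2⟩, hpV⟩, rfl⟩
      exact ⟨hU2sub p hp2, hpV⟩
    · rintro ⟨hxS, hxV'⟩
      obtain ⟨p, hpU, rfl⟩ := hVsub ⟨hxV', hxS⟩
      exact ⟨p, ⟨hpU, hxV'⟩, rfl⟩
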